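/- (Inclusion monotonicity) Let W₁ and W₂ be n×n real symmetric positive semidefinite matrices with W₁ ⪯ W₂ in the Loewner order, and let K⁽¹⁾ = W₁(W₁+I)⁻¹ and K⁽²⁾ = W₂(W₂+I)⁻¹ be the corresponding marginal kernels. Then for every subset S ⊆ {1,…,n}, the inclusion probabilities satisfy det(K⁽¹⁾_S) ≤ det(K⁽²⁾_S); equivalently, every sensor configuration S has at least as high an inclusion probability under the L-ensemble DPP with kernel W₂ as under the one with kernel W₁. -/

import Mathlib

open Matrix BigOperators

/-- The principal submatrix of `M` indexed by the subset `S`. -/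
def principalSubmatrix {n : ℕ} (M : Matrix (Fin n) (Fin n) ℝ) (S : Finset (Fin n)) :
    Matrix {i // i ∈ S} {i // i ∈ S} ℝ :=
  M.submatrix (fun i => (i : Fin n)) (fun i => (i : Fin n))

open scoped MatrixOrder in
lemma aux_one_le_det {m : Type*} [Fintype m] [DecidableEq m] {P : Matrix m m ℝ}
    (hP : P.PosSemidef) : 1 ≤ (1 + P).det := by
  have h1 := congrArg (Polynomial.eval (-1)) hP.1.charpoly_eq
  rw [Matrix.eval_charpoly, Polynomial.eval_prod] at h1
  have h2 : (scalar m (-1 : ℝ)) - P = -(1 + P) := by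
    rw [map_neg, map_one]; abel
  have h3 : ∀ i, Polynomial.eval (-1) (Polynomial.X - Polynomial.C (hP.1.eigenvalues i : ℝ))
      = (-1) * (1 + hP.1.eigenvalues i) := by
    intro i; simp; ring
  have h4 : (1 + P).det = ∏ i, (1 + hP.1.eigenvalues i) := by
    simp only [RCLike.ofReal_real_eq_id, id] at h1
    rw [h2, det_neg, Finset.prod_congr rfl (fun i _ => h3 i), Finset.prod_mul_distrib,
      Finset.prod_const, Finset.card_univ] at h1
    exact mul_left_cancel₀ (pow_ne_zero _ (by norm_num)) h1
  rw [h4]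
  have : ∏ i : m, (1 : ℝ) ≤ ∏ i, (1 + hP.1.eigenvalues i) :=
    Finset.prod_le_prod (fun _ _ => zero_le_one)
      (fun i _ => by linarith [hP.eigenvalues_nonneg i])
  simpa using this

open scoped MatrixOrder in
lemma aux_det_mono {m : Type*} [Fintype m] [DecidableEq m] {A B : Matrix m m ℝ}
    (hA : A.PosSemidef) (h : (B - A).PosSemidef) : A.det ≤ B.det := by
  have hB : B.PosSemidef := by simpa using hA.add h
  by_cases h0 : A.det = 0
  · rw [h0]; exact hB.det_nonneg
  have hAd : A.PosDef := hA.posDef_iff_det_ne_zero.2 h0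
  obtain ⟨C, hC⟩ := CStarAlgebra.nonneg_iff_eq_star_mul_self.mp h.nonneg
  have hBe : B = A + Cᴴ * C := by
    rw [← star_eq_conjTranspose, ← hC]; abel
  rw [hBe, det_add_mul _ _ (isUnit_iff_ne_zero.2 h0)]
  exact le_mul_of_one_le_right hA.det_nonneg
    (aux_one_le_det (hA.inv.mul_mul_conjTranspose_same C))

lemma aux_inv_anti {m : Type*} [Fintype m] [DecidableEq m] {A B : Matrix m m ℝ}
    (hA : A.PosDef) (h : (B - A).PosSemidef) : (A⁻¹ - B⁻¹).PosSemidef := by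
  have hB : B.PosDef := by simpa using hA.add_posSemidef h
  have hAi := hA.inv
  let _ := hAi.isUnit.invertible
  let _ := hB.isUnit.invertible
  have h1 : (fromBlocks B 1 1ᴴ A⁻¹).PosSemidef := by
    rw [PosDef.fromBlocks₂₂ _ _ hAi]
    simpa [nonsing_inv_nonsing_inv _ ((isUnit_iff_isUnit_det _).1 hA.isUnit)] using h
  rw [PosDef.fromBlocks₁₁ _ _ hB] at h1
  simpa using h1

/-- Inclusion monotonicity: if `W₁ ⪯ W₂` are positive semidefinite Gramians with
marginal kernels `K⁽ⁱ⁾ = Wᵢ(Wᵢ+I)⁻¹`, then every sensor configuration `S` has at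
least as high an inclusion probability `det(K_S)` under `W₂` as under `W₁`. -/
theorem inclusion_monotonicity {n : ℕ} (W₁ W₂ : Matrix (Fin n) (Fin n) ℝ)
    (hW₁ : W₁.PosSemidef) (hW₂ : W₂.PosSemidef) (h : (W₂ - W₁).PosSemidef) :
    ∀ S : Finset (Fin n),
      (principalSubmatrix (W₁ * (W₁ + 1)⁻¹) S).det
        ≤ (principalSubmatrix (W₂ * (W₂ + 1)⁻¹) S).det := by
  intro S
  have key : ∀ W : Matrix (Fin n) (Fin n) ℝ, W.PosSemidef →
      W * (W + 1)⁻¹ = 1 - (W + 1)⁻¹ := by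
    intro W hW
    have hu : IsUnit (W + 1).det :=
      (isUnit_iff_isUnit_det _).1 (PosDef.posSemidef_add hW PosDef.one).isUnit
    rw [eq_sub_iff_add_eq]
    calc W * (W + 1)⁻¹ + (W + 1)⁻¹ = (W + 1) * (W + 1)⁻¹ := by rw [add_mul, one_mul]
      _ = 1 := mul_nonsing_inv _ hu
  rw [key W₁ hW₁, key W₂ hW₂]
  refine aux_det_mono (PosSemidef.submatrix ?_ _) ?_
  · have e : (1 : Matrix (Fin n) (Fin n) ℝ)⁻¹ = 1 := inv_eq_right_inv (mul_one _)
    have hs : ((W₁ + 1) - (1 : Matrix (Fin n) (Fin n) ℝ)).PosSemidef := by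
      rw [add_sub_cancel_right]; exact hW₁
    have h0 := aux_inv_anti PosDef.one hs
    rw [e] at h0
    exact h0
  · have h1 := aux_inv_anti (A := W₁ + 1) (B := W₂ + 1)
      (PosDef.posSemidef_add hW₁ PosDef.one) (by simpa using h)
    have h2 := h1.submatrix (fun i : {i // i ∈ S} => (i : Fin n))
    convert h2 using 1
    ext i j
    simp [principalSubmatrix]
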